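/- arXiv:2005.13777 — 2 statements merged into one kernel-verified Lean document; each statement's English description precedes it below -/
import Mathlib

section
/- The computable FS-jump (=^{ce})⁺ is computably bireducible with the relation on ℕ given by: e ~ e' iff the set of columns {(W_e)_(n) : n ∈ ℕ} equals {(W_{e'})_(n) : n ∈ ℕ}. -/
/-- The `e`-th partial computable function. -/
def phi (e : ℕ) : ℕ →. ℕ :=
  Nat.Partrec.Code.eval (Denumerable.ofNat Nat.Partrec.Code e)

/-- `W_e`, the `e`-th c.e. set: the domain of `φ_e`. -/
def WSet (e : ℕ) : Set ℕ := (phi e).Dom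

/-- The `E`-equivalence class of `k`. -/
def classOf (E : ℕ → ℕ → Prop) (k : ℕ) : Set ℕ := {x | E k x}

/-- Computable reducibility of binary relations on ℕ. -/
def Reduces (E F : ℕ → ℕ → Prop) : Prop :=
  ∃ f : ℕ → ℕ, Computable f ∧ ∀ m n, E m n ↔ F (f m) (f n)

/-- The computable FS-jump of `E`: `e E⁺ e'` iff the set of `E`-classes of elements
of `ran φ_e` equals the set of `E`-classes of elements of `ran φ_{e'}`. -/
def FSJump (E : ℕ → ℕ → Prop) : ℕ → ℕ → Prop :=
  fun e e' => classOf E '' (phi e).ran = classOf E '' (phi e').ran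

/-- Equality of c.e. sets: `e =^{ce} e'` iff `W_e = W_{e'}`. -/
def eqCE : ℕ → ℕ → Prop := fun e e' => WSet e = WSet e'

/-- The set of columns of a set `A ⊆ ℕ`, where the `n`-th column is `{p : ⟨n,p⟩ ∈ A}`. -/
def columns (A : Set ℕ) : Set (Set ℕ) :=
  Set.range fun n => {p | Nat.pair n p ∈ A}

open Nat.Partrec in
lemma smn_index {f : ℕ → ℕ →. ℕ} (hf : Partrec₂ f) :
    ∃ g : ℕ → ℕ, Computable g ∧ ∀ e, phi (g e) = f e := by
  have h : Partrec fun m : ℕ => f m.unpair.1 m.unpair.2 :=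
    hf.comp (Computable.fst.comp Computable.unpair) (Computable.snd.comp Computable.unpair)
  obtain ⟨c, hc⟩ := Code.exists_code.1 (Partrec.nat_iff.1 h)
  refine ⟨fun e => Encodable.encode (Code.curry c e), ?_, ?_⟩
  · exact Computable.encode.comp
      ((Code.primrec₂_curry.comp (Primrec.const c) Primrec.id).to_comp)
  · intro e
    funext x
    simp [phi, Code.eval_curry, hc]

lemma phi_partrec : Partrec₂ phi :=
  Nat.Partrec.Code.eval_part.comp₂ ((Computable.ofNat _).comp Computable.fst) Computable.snd

lemma mem_WSet (i x : ℕ) : x ∈ WSet i ↔ ∃ y, y ∈ phi i x := PFun.mem_dom _ _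

lemma image_transfer {f g : ℕ → Set ℕ} (h : ∀ k l, f k = f l → g k = g l) {R S : Set ℕ}
    (hRS : f '' R = f '' S) : g '' R = g '' S := by
  apply Set.Subset.antisymm
  · rintro _ ⟨k, hk, rfl⟩
    obtain ⟨l, hl, e⟩ := hRS.subset ⟨k, hk, rfl⟩
    exact ⟨l, hl, h _ _ e⟩
  · rintro _ ⟨k, hk, rfl⟩
    obtain ⟨l, hl, e⟩ := hRS.superset ⟨k, hk, rfl⟩
    exact ⟨l, hl, h _ _ e⟩

lemma FSJump_eqCE_iff (e e' : ℕ) :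
    FSJump eqCE e e' ↔ WSet '' (phi e).ran = WSet '' (phi e').ran := by
  have key : ∀ k l, classOf eqCE k = classOf eqCE l ↔ WSet k = WSet l := by
    intro k l
    constructor
    · intro h
      have : l ∈ classOf eqCE k := by rw [h]; exact rfl
      exact this
    · intro h
      simp [classOf, eqCE, h]
  exact ⟨image_transfer fun k l => (key k l).1, image_transfer fun k l => (key k l).2⟩

/-- The uniform family used to reduce the jump to column equality. -/
def fwd (e m : ℕ) : Part ℕ :=
  Nat.casesOn (m.unpair.1) Part.none fun n =>
    (phi e n).bind fun k => Nat.casesOn (m.unpair.2) (Part.some 0) fun p => phi k p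

lemma fwd_partrec : Partrec₂ fwd := by
  have h1 : Computable fun a : ℕ × ℕ => a.2.unpair.1 :=
    Computable.fst.comp (Computable.unpair.comp Computable.snd)
  have h2 : Computable fun a : ((ℕ × ℕ) × ℕ) × ℕ => a.1.1.2.unpair.2 :=
    Computable.snd.comp (Computable.unpair.comp
      (Computable.snd.comp (Computable.fst.comp Computable.fst)))
  have h3 : Partrec fun a : ((ℕ × ℕ) × ℕ) × ℕ =>
      (Nat.casesOn (a.1.1.2.unpair.2) (Part.some 0) fun p => phi a.2 p : Part ℕ) :=
    Partrec.nat_casesOn_right h2 (Computable.const 0)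
      (phi_partrec.comp (Computable.snd.comp Computable.fst) Computable.snd)
  have h4 : Partrec fun a : (ℕ × ℕ) × ℕ => (phi a.1.1 a.2).bind fun k =>
      (Nat.casesOn (a.1.2.unpair.2) (Part.some 0) fun p => phi k p : Part ℕ) :=
    Partrec.bind (phi_partrec.comp (Computable.fst.comp Computable.fst) Computable.snd) h3
  -- use an option-valued predecessor for the outer case split
  have h5 : Computable fun a : ℕ × ℕ =>
      (Nat.casesOn (a.2.unpair.1) none some : Option ℕ) :=
    Computable.nat_casesOn h1 (Computable.const none)
      (Computable.option_some.comp Computable.snd)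
  have h6 := Partrec.bind (Computable.ofOption h5) (Partrec.to₂ h4)
  refine h6.of_eq ?_
  rintro ⟨e, m⟩
  simp only [fwd]
  cases m.unpair.1 <;> simp

/-- Tagged copy of a set. -/
def tag (A : Set ℕ) : Set ℕ := {p | p = 0 ∨ ∃ q ∈ A, p = q + 1}

lemma tag_inj : Function.Injective tag := by
  intro A B h
  ext q
  have := Set.ext_iff.1 h (q + 1)
  simpa [tag] using this

lemma tag_ne (A : Set ℕ) : tag A ≠ ∅ := by
  intro h
  have : (0 : ℕ) ∈ tag A := Or.inl rfl
  rw [h] at this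
  exact this

lemma columns_fwd {e i : ℕ} (h : phi i = fwd e) :
    columns (WSet i) = insert ∅ (tag '' (WSet '' (phi e).ran)) := by
  have h0 : {p | Nat.pair 0 p ∈ WSet i} = ∅ := by
    ext p
    simp [mem_WSet, h, fwd]
  have hs : ∀ n k, k ∈ phi e n → {p | Nat.pair (n + 1) p ∈ WSet i} = tag (WSet k) := by
    intro n k hk
    ext p
    rw [Part.eq_some_iff.symm] at hk
    cases p <;> simp [mem_WSet, h, fwd, hk, tag]
  have hd : ∀ n, (∀ k, k ∉ phi e n) → {p | Nat.pair (n + 1) p ∈ WSet i} = ∅ := by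
    intro n hk
    rw [← Part.eq_none_iff] at hk
    ext p
    simp [mem_WSet, h, fwd, hk]
  ext A
  constructor
  · rintro ⟨n, rfl⟩
    cases n with
    | zero => exact Or.inl h0
    | succ n =>
      by_cases hk : ∃ k, k ∈ phi e n
      · obtain ⟨k, hk⟩ := hk
        exact Or.inr ⟨_, ⟨k, ⟨n, hk⟩, rfl⟩, (hs n k hk).symm⟩
      · exact Or.inl (hd n (not_exists.1 hk))
  · rintro (rfl | ⟨_, ⟨k, ⟨n, hk⟩, rfl⟩, rfl⟩)
    · exact ⟨0, h0⟩
    · exact ⟨n + 1, hs n k hk⟩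

/-- `(=^{ce})⁺` is computably bireducible with the relation identifying codes whose
c.e. sets have the same set of columns. -/
theorem jump_eqCE_bireducible_columns :
    Reduces (FSJump eqCE) (fun e e' => columns (WSet e) = columns (WSet e')) ∧
      Reduces (fun e e' => columns (WSet e) = columns (WSet e')) (FSJump eqCE) := by
  constructor
  · obtain ⟨g, hg, hgs⟩ := smn_index fwd_partrec
    refine ⟨g, hg, fun m n => ?_⟩
    rw [FSJump_eqCE_iff]
    simp only [columns_fwd (hgs _)]
    constructor
    · intro h
      rw [h]
    · intro h
      have hne : ∀ S : Set (Set ℕ), ∅ ∉ tag '' S := by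
        rintro S ⟨A, _, hA⟩
        exact tag_ne A hA
      have h' := congrArg (fun T => T \ {∅}) h
      simp only [Set.insert_diff_self_of_notMem (hne _)] at h'
      exact tag_inj.image_injective h'
  · have hb : Partrec₂ fun e n : ℕ => (Part.some (Encodable.encode
        (Nat.Partrec.Code.curry (Denumerable.ofNat Nat.Partrec.Code e) n)) : Part ℕ) :=
      Computable.encode.comp (Nat.Partrec.Code.primrec₂_curry.to_comp.comp
        ((Computable.ofNat _).comp Computable.fst) Computable.snd)
    obtain ⟨g, hg, hgs⟩ := smn_index hb
    have key : ∀ e, WSet '' (phi (g e)).ran = columns (WSet e) := by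
      intro e
      have hW : ∀ n, WSet (Encodable.encode
          (Nat.Partrec.Code.curry (Denumerable.ofNat Nat.Partrec.Code e) n)) =
          {p | Nat.pair n p ∈ WSet e} := by
        intro n
        ext p
        simp [WSet, phi, PFun.mem_dom, Nat.Partrec.Code.eval_curry]
      rw [hgs]
      ext A
      constructor
      · rintro ⟨k, ⟨n, hk⟩, rfl⟩
        rw [Part.mem_some_iff.1 hk]
        exact ⟨n, (hW n).symm⟩
      · rintro ⟨n, rfl⟩
        exact ⟨_, ⟨n, Part.mem_some _⟩, hW n⟩
    refine ⟨g, hg, fun m n => ?_⟩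
    rw [FSJump_eqCE_iff, key, key]
end

section
/- If E is a ceer with infinitely many equivalence classes, then id < E⁺: the identity relation on ℕ is computably reducible to E⁺, but E⁺ is not computably reducible to the identity relation. -/
/-- A ceer: an equivalence relation on ℕ which is c.e. as a set of pairs. -/
def Ceer (E : ℕ → ℕ → Prop) : Prop :=
  Equivalence E ∧ ∃ e : ℕ, ∀ m n : ℕ, E m n ↔ Nat.pair m n ∈ WSet e

open Nat.Partrec in
/-- The decidable check that the first `k+1` numbers are covered by the `n` elements of `L`
within `s` steps. -/
def CovChk (c : Code) (n : ℕ) (t : ℕ × List ℕ × ℕ) : Prop :=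
  t.2.1.length = n ∧ ∀ i < t.1 + 1, ∃ x ∈ t.2.1, (Code.evaln t.2.2 c (Nat.pair i x)).isSome = true

open Nat.Partrec in
theorem covChk_primrec (c : Code) : PrimrecRel (CovChk c) := by
  have h1 : PrimrecRel (fun (x : ℕ) (p : ℕ × ℕ) =>
      (Code.evaln p.2 c (Nat.pair p.1 x)).isSome = true) := by
    refine Primrec.eq.comp (Primrec.option_isSome.comp (Code.primrec_evaln.comp
      (Primrec.pair (Primrec.pair (Primrec.snd.comp Primrec.snd) (Primrec.const c))
        (Primrec₂.natPair.comp (Primrec.fst.comp Primrec.snd) Primrec.fst)))) (Primrec.const true)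
  have h2 := h1.exists_mem_list
  have h3 : PrimrecRel (fun (i : ℕ) (p : List ℕ × ℕ) =>
      ∃ x ∈ p.1, (Code.evaln p.2 c (Nat.pair i x)).isSome = true) :=
    h2.comp (Primrec.fst.comp Primrec.snd)
      (Primrec.pair Primrec.fst (Primrec.snd.comp Primrec.snd))
  have h4 := h3.forall_mem_list
  have h5 : PrimrecPred (fun q : ℕ × (ℕ × List ℕ × ℕ) => ∀ i < q.2.1 + 1, ∃ x ∈ q.2.2.1,
      (Code.evaln q.2.2.2 c (Nat.pair i x)).isSome = true) :=
    (h4.comp (Primrec.list_range.comp (Primrec.succ.comp (Primrec.fst.comp Primrec.snd)))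
      (Primrec.snd.comp Primrec.snd)).of_eq (by simp)
  have h6 : PrimrecPred (fun q : ℕ × (ℕ × List ℕ × ℕ) => q.2.2.1.length = q.1) :=
    Primrec.eq.comp (Primrec.list_length.comp
      (Primrec.fst.comp (Primrec.snd.comp Primrec.snd))) Primrec.fst
  exact h6.and h5

/-- The first `k` numbers are covered by `n` classes. -/
def Cov (E : ℕ → ℕ → Prop) (n k : ℕ) : Prop :=
  ∃ L : List ℕ, L.length = n ∧ ∀ i < k, ∃ x ∈ L, E i x

open Nat.Partrec in
theorem cov_iff (E : ℕ → ℕ → Prop) (c : Code)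
    (hc : ∀ m n, E m n ↔ (Code.eval c (Nat.pair m n)).Dom) (n k : ℕ) :
    Cov E n (k + 1) ↔ ∃ L s, CovChk c n (k, L, s) := by
  constructor
  · rintro ⟨L, hL, h⟩
    have : ∀ i, ∃ s, i < k + 1 → ∃ x ∈ L, (Code.evaln s c (Nat.pair i x)).isSome = true := by
      intro i
      by_cases hi : i < k + 1
      · obtain ⟨x, hx, hE⟩ := h i hi
        obtain ⟨y, hy⟩ := Part.dom_iff_mem.1 ((hc _ _).1 hE)
        obtain ⟨s, hs⟩ := Code.evaln_complete.1 hy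
        exact ⟨s, fun _ => ⟨x, hx, Option.isSome_iff_exists.2 ⟨y, hs⟩⟩⟩
      · exact ⟨0, fun h => absurd h hi⟩
    choose s hs using this
    refine ⟨L, (Finset.range (k + 1)).sup s, hL, fun i hi => ?_⟩
    obtain ⟨x, hx, h'⟩ := hs i hi
    obtain ⟨y, hy⟩ := Option.isSome_iff_exists.1 h'
    exact ⟨x, hx, Option.isSome_iff_exists.2 ⟨y, Code.evaln_mono
      (Finset.le_sup (f := s) (Finset.mem_range.2 hi)) hy⟩⟩
  · rintro ⟨L, s, hL, h⟩
    refine ⟨L, hL, fun i hi => ?_⟩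
    obtain ⟨x, hx, h'⟩ := h i hi
    obtain ⟨y, hy⟩ := Option.isSome_iff_exists.1 h'
    exact ⟨x, hx, (hc _ _).2 (Part.dom_iff_mem.2 ⟨y, Code.evaln_sound hy⟩)⟩

open Nat.Partrec in
theorem exists_enum (E : ℕ → ℕ → Prop) (c : Code)
    (hc : ∀ m n, E m n ↔ (Code.eval c (Nat.pair m n)).Dom) :
    ∃ f : ℕ → ℕ, Computable f ∧ ∀ n, (phi (f n)).ran = {k | Cov E n (k + 1)} := by
  classical
  let g : ℕ → ℕ × List ℕ × ℕ → Option ℕ := fun n t => if CovChk c n t then some t.1 else none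
  have hg : Primrec₂ g := Primrec.ite (covChk_primrec c)
    (Primrec.option_some.comp (Primrec.fst.comp Primrec.snd)) (Primrec.const none)
  have hg' : Primrec (fun m : ℕ => g m.unpair.1 (Denumerable.ofNat _ m.unpair.2)) :=
    hg.comp (Primrec.fst.comp Primrec.unpair)
      ((Primrec.ofNat _).comp (Primrec.snd.comp Primrec.unpair))
  have hp : Nat.Partrec (fun m : ℕ =>
      (g m.unpair.1 (Denumerable.ofNat _ m.unpair.2) : Part ℕ)) :=
    Partrec.nat_iff.1 (Computable.ofOption hg'.to_comp)
  obtain ⟨d, hd⟩ := Code.exists_code.1 hp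
  refine ⟨fun n => Encodable.encode (Code.curry d n), ?_, fun n => ?_⟩
  · exact (Primrec.encode.comp (Code.primrec₂_curry.comp (Primrec.const d) Primrec.id)).to_comp
  · ext k
    simp only [phi, PFun.ran, Denumerable.ofNat_encode, Code.eval_curry, hd, Nat.unpair_pair,
      Set.mem_ofPred_eq, cov_iff E c hc, Part.mem_coe]
    constructor
    · rintro ⟨a, ha⟩
      rcases h : Denumerable.ofNat (ℕ × List ℕ × ℕ) a with ⟨k', L, s⟩
      rw [h] at ha
      by_cases hC : CovChk c n (k', L, s)
      · simp [g, hC] at ha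
        subst ha
        exact ⟨L, s, hC⟩
      · simp [g, hC] at ha
    · rintro ⟨L, s, hC⟩
      refine ⟨Encodable.encode (k, L, s), ?_⟩
      rw [Denumerable.ofNat_encode]
      simp [g, hC]

theorem classOf_eq_iff {E : ℕ → ℕ → Prop} (hE : Equivalence E) (a b : ℕ) :
    classOf E a = classOf E b ↔ E a b := by
  constructor
  · intro h
    have : b ∈ classOf E b := hE.refl b
    rw [← h] at this
    exact this
  · intro h
    ext x
    exact ⟨fun hx => hE.trans (hE.symm h) hx, fun hx => hE.trans h hx⟩

theorem exists_not_cov {E : ℕ → ℕ → Prop} (hE : Equivalence E)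
    (hinf : (Set.range (classOf E)).Infinite) (n : ℕ) : ∃ k, ¬ Cov E n k := by
  classical
  by_contra! hcon
  obtain ⟨T, hT, hcard⟩ := hinf.exists_subset_card_eq (n + 1)
  choose! r hr using fun A (hA : A ∈ T) => hT hA
  obtain ⟨L, hL, h⟩ := hcon (T.sup r + 1)
  have hsub : T ⊆ L.toFinset.image (classOf E) := by
    intro A hA
    obtain ⟨x, hx, hEx⟩ := h (r A) (Nat.lt_succ_of_le (Finset.le_sup (f := r) hA))
    refine Finset.mem_image.2 ⟨x, List.mem_toFinset.2 hx, ?_⟩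
    rw [← hr A hA]
    exact ((classOf_eq_iff hE _ _).2 hEx).symm
  have := Finset.card_le_card hsub
  have h2 := Finset.card_image_le (s := L.toFinset) (f := classOf E)
  have h3 := L.toFinset_card_le
  omega

theorem cov_mono_left {E : ℕ → ℕ → Prop} {n m k : ℕ} (hnm : n ≤ m) (h : Cov E n k) :
    Cov E m k := by
  obtain ⟨L, hL, h⟩ := h
  refine ⟨L ++ List.replicate (m - n) 0, by simp; omega, fun i hi => ?_⟩
  obtain ⟨x, hx, hE⟩ := h i hi
  exact ⟨x, List.mem_append_left _ hx, hE⟩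

theorem exists_new {E : ℕ → ℕ → Prop} (hE : Equivalence E)
    (hinf : (Set.range (classOf E)).Infinite) (n : ℕ) :
    ∃ k, Cov E (n + 1) (k + 1) ∧ ∀ j, Cov E n (j + 1) → ¬ E j k := by
  classical
  have hex := exists_not_cov hE hinf n
  obtain ⟨k, hk⟩ : ∃ k, Nat.find hex = k + 1 := by
    refine Nat.exists_eq_succ_of_ne_zero fun h0 => ?_
    have := Nat.find_spec hex
    rw [h0] at this
    exact this ⟨List.replicate n 0, by simp, fun i hi => absurd hi (Nat.not_lt_zero i)⟩
  have hn : ¬ Cov E n (k + 1) := hk ▸ Nat.find_spec hex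
  have hy : Cov E n k := by
    by_contra h
    have := Nat.find_min' hex h
    omega
  obtain ⟨L, hL, h⟩ := hy
  refine ⟨k, ⟨k :: L, by simp [hL], fun i hi => ?_⟩, ?_⟩
  · rcases Nat.lt_succ_iff_lt_or_eq.1 hi with h' | rfl
    · obtain ⟨x, hx, hx'⟩ := h i h'
      exact ⟨x, List.mem_cons_of_mem _ hx, hx'⟩
    · exact ⟨i, by simp, hE.refl i⟩
  · rintro j ⟨L', hL', h'⟩ hjk
    apply hn
    rcases Nat.lt_or_ge j k with hjk' | hjk'
    · refine ⟨L, hL, fun i hi => ?_⟩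
      rcases Nat.lt_succ_iff_lt_or_eq.1 hi with hi' | rfl
      · exact h i hi'
      · obtain ⟨x, hx, hx'⟩ := h j hjk'
        exact ⟨x, hx, hE.trans (hE.symm hjk) hx'⟩
    · exact ⟨L', hL', fun i hi => h' i (by omega)⟩

theorem cov_ne {E : ℕ → ℕ → Prop} (hE : Equivalence E)
    (hinf : (Set.range (classOf E)).Infinite) {n m : ℕ} (hnm : n < m) :
    classOf E '' {k | Cov E n (k + 1)} ≠ classOf E '' {k | Cov E m (k + 1)} := by
  intro heq
  obtain ⟨k, hk, hnew⟩ := exists_new hE hinf n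
  have : classOf E k ∈ classOf E '' {k | Cov E m (k + 1)} := ⟨k, cov_mono_left hnm hk, rfl⟩
  rw [← heq] at this
  obtain ⟨j, hj, hjk⟩ := this
  exact hnew j hj ((classOf_eq_iff hE _ _).1 hjk)

open Nat.Partrec in
theorem not_jump_reduces (E : ℕ → ℕ → Prop) : ¬ Reduces (FSJump E) (@Eq ℕ) := by
  rintro ⟨h, hh, hred⟩
  obtain ⟨z, hz⟩ := Code.exists_code.1 Nat.Partrec.none
  have hze : (phi (Encodable.encode z)).ran = ∅ := by
    ext x; simp [phi, hz, PFun.ran]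
  have key : ∀ c : Code, Code.eval c ∈ {f : ℕ →. ℕ | f.ran = ∅} ↔
      h (Encodable.encode c) = h (Encodable.encode z) := by
    intro c
    rw [← hred, FSJump, hze, Set.image_empty, Set.image_eq_empty]
    simp [phi]
  have hcomp : ComputablePred fun c : Code => Code.eval c ∈ {f : ℕ →. ℕ | f.ran = ∅} := by
    refine ComputablePred.of_eq (p := fun c : Code =>
      h (Encodable.encode c) = h (Encodable.encode z)) ?_ fun c => (key c).symm
    refine ⟨inferInstance, ?_⟩
    exact (Primrec.eq (α := ℕ)).decide.to_comp.comp (hh.comp Computable.encode) (Computable.const _)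
  have := ComputablePred.rice _ hcomp (f := fun _ => Part.none) (g := fun n => Part.some n)
    Nat.Partrec.none Nat.Partrec.some (by ext x; simp [PFun.ran])
  have h0 : (0 : ℕ) ∈ PFun.ran (fun n : ℕ => Part.some n) := ⟨0, Part.mem_some 0⟩
  replace this : PFun.ran (fun n : ℕ => Part.some n) = ∅ := this
  rw [this] at h0
  exact h0

/-- If `E` is a ceer with infinitely many classes, then `id < E⁺`. -/
theorem id_lt_jump_of_ceer (E : ℕ → ℕ → Prop) (hE : Ceer E)
    (hinf : (Set.range (classOf E)).Infinite) :
    Reduces (@Eq ℕ) (FSJump E) ∧ ¬ Reduces (FSJump E) (@Eq ℕ) := by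
  refine ⟨?_, not_jump_reduces E⟩
  obtain ⟨hEq, e, he⟩ := hE
  obtain ⟨f, hf, hran⟩ := exists_enum E (Denumerable.ofNat Nat.Partrec.Code e) he
  refine ⟨f, hf, fun m n => ⟨fun h => by subst h; rfl, fun h => ?_⟩⟩
  rw [FSJump, hran, hran] at h
  rcases lt_trichotomy m n with h' | h' | h'
  · exact absurd h (cov_ne hEq hinf h')
  · exact h'
  · exact absurd h.symm (cov_ne hEq hinf h')
end
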